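/- arXiv:2010.06870 — 4 statements merged into one kernel-verified Lean document; each statement's English description precedes it below -/
import Mathlib

section
/- Let H be a real Hilbert space, let η > 0, L > 0, δ ≥ 0, let F_k, F : H → ℝ be differentiable functions with ∇F_k L-Lipschitz, and suppose ‖∇F_k(x) − ∇F(x)‖ ≤ δ for all x ∈ H. Fix an initial point w₀ ∈ H and define sequences w, v : ℕ → H by w(0) = v(0) = w₀, w(e) = w(e−1) − η∇F_k(w(e−1)) and v(e) = v(e−1) − η∇F(v(e−1)) for e ≥ 1. Then for all e ∈ ℕ, ‖w(e) − v(e)‖ ≤ (δ/L)·((ηL + 1)^e − 1). -/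
/-- Lemma 2: the upper bound of the divergence between the FedGroup client
model and the virtual group model after `e` local gradient steps. -/
theorem client_virtual_divergence
    {H : Type*} [NormedAddCommGroup H] [InnerProductSpace ℝ H] [CompleteSpace H]
    (η L δ : ℝ) (hη : 0 < η) (hL : 0 < L) (hδ : 0 ≤ δ)
    (Fk F : H → ℝ)
    (hFk : Differentiable ℝ Fk) (hF : Differentiable ℝ F)
    (hlip : ∀ w v : H, ‖gradient Fk w - gradient Fk v‖ ≤ L * ‖w - v‖)
    (hdiv : ∀ x : H, ‖gradient Fk x - gradient F x‖ ≤ δ)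
    (w₀ : H) (w v : ℕ → H)
    (hw0 : w 0 = w₀) (hv0 : v 0 = w₀)
    (hw : ∀ e : ℕ, 1 ≤ e → w e = w (e - 1) - η • gradient Fk (w (e - 1)))
    (hv : ∀ e : ℕ, 1 ≤ e → v e = v (e - 1) - η • gradient F (v (e - 1))) :
    ∀ e : ℕ, ‖w e - v e‖ ≤ (δ / L) * ((η * L + 1) ^ e - 1) := by
  intro e
  induction e with
  | zero => simp [hw0, hv0]
  | succ n ih =>
    have h1 := hw (n + 1) (by omega)
    have h2 := hv (n + 1) (by omega)
    simp only [Nat.add_sub_cancel] at h1 h2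
    have h3 : w (n + 1) - v (n + 1) = (w n - v n)
        - η • ((gradient Fk (w n) - gradient Fk (v n))
          + (gradient Fk (v n) - gradient F (v n))) := by
      rw [h1, h2, sub_add_sub_cancel, smul_sub]
      abel
    have h4 : ‖(gradient Fk (w n) - gradient Fk (v n))
          + (gradient Fk (v n) - gradient F (v n))‖ ≤ L * ‖w n - v n‖ + δ :=
      (norm_add_le _ _).trans (add_le_add (hlip _ _) (hdiv _))
    calc ‖w (n + 1) - v (n + 1)‖
        ≤ ‖w n - v n‖ + η * (L * ‖w n - v n‖ + δ) := by
          rw [h3]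
          refine (norm_sub_le _ _).trans ?_
          rw [norm_smul, Real.norm_of_nonneg hη.le]
          gcongr
      _ = (η * L + 1) * ‖w n - v n‖ + η * δ := by ring
      _ ≤ (η * L + 1) * ((δ / L) * ((η * L + 1) ^ n - 1)) + η * δ := by gcongr
      _ = (δ / L) * ((η * L + 1) ^ (n + 1) - 1) := by
          rw [pow_succ]
          field_simp
          ring
end

section
/- Let H be a real Hilbert space, let η > 0, L > 0, let K be a finite index set with nonnegative weights p : K → ℝ summing to 1, let F : H → ℝ be differentiable, and for each k ∈ K let F_k : H → ℝ be differentiable with ∇F_k L-Lipschitz and ‖∇F_k(x) − ∇F(x)‖ ≤ δ_k for all x ∈ H, where δ_k ≥ 0. Fix w₀ ∈ H and define, for each k, the sequence w^k by w^k(0) = w₀ and w^k(e) = w^k(e−1) − η∇F_k(w^k(e−1)), and define v by v(0) = w₀ and v(e) = v(e−1) − η∇F(v(e−1)). Then for any E ∈ ℕ, ‖Σ_{k∈K} p_k·w^k(E) − v(E)‖ ≤ ((Σ_{k∈K} p_k·δ_k)/L)·((ηL + 1)^E − 1). -/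
/-- Eq. (12): the divergence between the weighted average of the client models
and the virtual group model after `E` local epochs. -/
theorem averaged_divergence
    {H : Type*} [NormedAddCommGroup H] [InnerProductSpace ℝ H] [CompleteSpace H]
    (η L : ℝ) (hη : 0 < η) (hL : 0 < L)
    {K : Type*} [Fintype K]
    (p : K → ℝ) (hp : ∀ k, 0 ≤ p k) (hsum : ∑ k, p k = 1)
    (δ : K → ℝ) (hδ : ∀ k, 0 ≤ δ k)
    (F : H → ℝ) (hF : Differentiable ℝ F)
    (Fk : K → H → ℝ) (hFk : ∀ k, Differentiable ℝ (Fk k))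
    (hlip : ∀ k, ∀ w v : H, ‖gradient (Fk k) w - gradient (Fk k) v‖ ≤ L * ‖w - v‖)
    (hdiv : ∀ k, ∀ x : H, ‖gradient (Fk k) x - gradient F x‖ ≤ δ k)
    (w₀ : H) (w : K → ℕ → H) (v : ℕ → H)
    (hw0 : ∀ k, w k 0 = w₀) (hv0 : v 0 = w₀)
    (hw : ∀ k, ∀ e : ℕ, 1 ≤ e → w k e = w k (e - 1) - η • gradient (Fk k) (w k (e - 1)))
    (hv : ∀ e : ℕ, 1 ≤ e → v e = v (e - 1) - η • gradient F (v (e - 1)))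
    (E : ℕ) :
    ‖(∑ k, p k • w k E) - v E‖ ≤
      ((∑ k, p k * δ k) / L) * ((η * L + 1) ^ E - 1) := by
  have key : ∀ k, ∀ e : ℕ, ‖w k e - v e‖ ≤ δ k / L * ((η * L + 1) ^ e - 1) := by
    intro k e
    induction e with
    | zero => simp [hw0, hv0]
    | succ n ih =>
      have h1 := hw k (n + 1) (by omega)
      have h2 := hv (n + 1) (by omega)
      simp only [Nat.add_sub_cancel] at h1 h2
      have h3 : w k (n + 1) - v (n + 1) = (w k n - v n)
          - η • ((gradient (Fk k) (w k n) - gradient (Fk k) (v n))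
            + (gradient (Fk k) (v n) - gradient F (v n))) := by
        rw [h1, h2, sub_add_sub_cancel, smul_sub]
        abel
      have h4 : ‖(gradient (Fk k) (w k n) - gradient (Fk k) (v n))
            + (gradient (Fk k) (v n) - gradient F (v n))‖ ≤ L * ‖w k n - v n‖ + δ k :=
        (norm_add_le _ _).trans (add_le_add (hlip k _ _) (hdiv k _))
      calc ‖w k (n + 1) - v (n + 1)‖
          ≤ ‖w k n - v n‖ + η * (L * ‖w k n - v n‖ + δ k) := by
            rw [h3]
            refine (norm_sub_le _ _).trans ?_
            rw [norm_smul, Real.norm_of_nonneg hη.le]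
            gcongr
        _ = (η * L + 1) * ‖w k n - v n‖ + η * δ k := by ring
        _ ≤ (η * L + 1) * (δ k / L * ((η * L + 1) ^ n - 1)) + η * δ k := by gcongr
        _ = δ k / L * ((η * L + 1) ^ (n + 1) - 1) := by
            field_simp
            ring
  have h5 : (∑ k, p k • w k E) - v E = ∑ k, p k • (w k E - v E) := by
    simp only [smul_sub, Finset.sum_sub_distrib]
    rw [← Finset.sum_smul, hsum, one_smul]
  rw [h5, Finset.sum_div, Finset.sum_mul]
  refine (norm_sum_le _ _).trans (Finset.sum_le_sum fun k _ => ?_)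
  rw [norm_smul, Real.norm_of_nonneg (hp k), mul_div_assoc, mul_assoc]
  exact mul_le_mul_of_nonneg_left (key k E) (hp k)
end

section
/- Let H be a real Hilbert space, let η > 0, L > 0, M ≥ 0, let K be a finite index set with nonnegative weights p : K → ℝ summing to 1, let F : H → ℝ be differentiable and M-Lipschitz continuous, and for each k ∈ K let F_k : H → ℝ be differentiable with ∇F_k L-Lipschitz and ‖∇F_k(x) − ∇F(x)‖ ≤ δ_k for all x ∈ H, where δ_k ≥ 0. Fix w₀ ∈ H and define, for each k, w^k(0) = w₀ and w^k(e) = w^k(e−1) − η∇F_k(w^k(e−1)), and define v(0) = w₀ and v(e) = v(e−1) − η∇F(v(e−1)). Then for any E ∈ ℕ, |F(Σ_{k∈K} p_k·w^k(E)) − F(v(E))| ≤ (M·(Σ_{k∈K} p_k·δ_k)/L)·((ηL + 1)^E − 1). -/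
/-- Theorem 1: the convergence bound of FedGroup without inter-group
aggregation is `(δM/L)((ηL+1)^E − 1)`. -/
theorem fedgroup_no_intergroup_bound
    {H : Type*} [NormedAddCommGroup H] [InnerProductSpace ℝ H] [CompleteSpace H]
    (η L M : ℝ) (hη : 0 < η) (hL : 0 < L) (hM : 0 ≤ M)
    {K : Type*} [Fintype K]
    (p : K → ℝ) (hp : ∀ k, 0 ≤ p k) (hsum : ∑ k, p k = 1)
    (δ : K → ℝ) (hδ : ∀ k, 0 ≤ δ k)
    (F : H → ℝ) (hF : Differentiable ℝ F)
    (hFlip : ∀ w v : H, |F w - F v| ≤ M * ‖w - v‖)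
    (Fk : K → H → ℝ) (hFk : ∀ k, Differentiable ℝ (Fk k))
    (hlip : ∀ k, ∀ w v : H, ‖gradient (Fk k) w - gradient (Fk k) v‖ ≤ L * ‖w - v‖)
    (hdiv : ∀ k, ∀ x : H, ‖gradient (Fk k) x - gradient F x‖ ≤ δ k)
    (w₀ : H) (w : K → ℕ → H) (v : ℕ → H)
    (hw0 : ∀ k, w k 0 = w₀) (hv0 : v 0 = w₀)
    (hw : ∀ k, ∀ e : ℕ, 1 ≤ e → w k e = w k (e - 1) - η • gradient (Fk k) (w k (e - 1)))
    (hv : ∀ e : ℕ, 1 ≤ e → v e = v (e - 1) - η • gradient F (v (e - 1)))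
    (E : ℕ) :
    |F (∑ k, p k • w k E) - F (v E)| ≤
      M * (∑ k, p k * δ k) / L * ((η * L + 1) ^ E - 1) := by
  have key : ∀ k, ∀ e : ℕ, ‖w k e - v e‖ ≤ δ k / L * ((η * L + 1) ^ e - 1) := by
    intro k e
    induction e with
    | zero => simp [hw0, hv0]
    | succ n ih =>
      have h1 := hw k (n + 1) (by omega)
      have h2 := hv (n + 1) (by omega)
      simp only [Nat.add_sub_cancel] at h1 h2
      have h3 : w k (n + 1) - v (n + 1) = (w k n - v n)
          - η • ((gradient (Fk k) (w k n) - gradient (Fk k) (v n))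
            + (gradient (Fk k) (v n) - gradient F (v n))) := by
        rw [h1, h2]
        module
      have h4 : ‖(gradient (Fk k) (w k n) - gradient (Fk k) (v n))
            + (gradient (Fk k) (v n) - gradient F (v n))‖ ≤ L * ‖w k n - v n‖ + δ k :=
        (norm_add_le _ _).trans (add_le_add (hlip k _ _) (hdiv k _))
      calc ‖w k (n + 1) - v (n + 1)‖
          ≤ ‖w k n - v n‖ + η * (L * ‖w k n - v n‖ + δ k) := by
            rw [h3]
            refine (norm_sub_le _ _).trans ?_
            rw [norm_smul, Real.norm_of_nonneg hη.le]
            gcongr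
        _ = (η * L + 1) * ‖w k n - v n‖ + η * δ k := by ring
        _ ≤ (η * L + 1) * (δ k / L * ((η * L + 1) ^ n - 1)) + η * δ k := by
            gcongr
        _ = δ k / L * ((η * L + 1) ^ (n + 1) - 1) := by
            field_simp
            ring
  have hs : ∑ k, p k • w k E - v E = ∑ k, p k • (w k E - v E) := by
    simp only [smul_sub, Finset.sum_sub_distrib]
    rw [← Finset.sum_smul, hsum, one_smul]
  have hn : ‖∑ k, p k • w k E - v E‖
      ≤ (∑ k, p k * δ k) / L * ((η * L + 1) ^ E - 1) := by
    rw [hs, Finset.sum_div, Finset.sum_mul]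
    refine (norm_sum_le _ _).trans (Finset.sum_le_sum fun k _ => ?_)
    rw [norm_smul, Real.norm_of_nonneg (hp k), mul_div_assoc, mul_assoc]
    exact mul_le_mul_of_nonneg_left (key k E) (hp k)
  refine (hFlip _ _).trans ?_
  rw [mul_div_assoc, mul_assoc]
  exact mul_le_mul_of_nonneg_left hn hM
end

section
/- Let H be a real Hilbert space, let η > 0, L > 0, M ≥ 0, η_g ≥ 0, let K be a finite index set with nonnegative weights p : K → ℝ summing to 1, let F : H → ℝ be differentiable and M-Lipschitz continuous, and for each k ∈ K let F_k : H → ℝ be differentiable with ∇F_k L-Lipschitz and ‖∇F_k(x) − ∇F(x)‖ ≤ δ_k for all x ∈ H, where δ_k ≥ 0. Fix w₀ ∈ H and define, for each k, w^k(0) = w₀ and w^k(e) = w^k(e−1) − η∇F_k(w^k(e−1)), and define v(0) = w₀ and v(e) = v(e−1) − η∇F(v(e−1)). Let I be a finite index set and for each l ∈ I let u_l ∈ H with u_l ≠ 0, and define w̃ = Σ_{k∈K} p_k·w^k(E) + η_g · Σ_{l∈I} u_l/‖u_l‖ for some E ∈ ℕ. Then |F(w̃) − F(v(E))| ≤ (M·(Σ_{k∈K}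 p_k·δ_k)/L)·((ηL + 1)^E − 1) + M·η_g·|I|. -/
/-- Eq. (17): the convergence bound of FedGroup with inter-group aggregation,
with the Lipschitz constant `M` carried through the inter-group term. -/
theorem fedgroup_intergroup_bound
    {H : Type*} [NormedAddCommGroup H] [InnerProductSpace ℝ H] [CompleteSpace H]
    (η L M ηg : ℝ) (hη : 0 < η) (hL : 0 < L) (hM : 0 ≤ M) (hηg : 0 ≤ ηg)
    {K : Type*} [Fintype K]
    (p : K → ℝ) (hp : ∀ k, 0 ≤ p k) (hsum : ∑ k, p k = 1)
    (δ : K → ℝ) (hδ : ∀ k, 0 ≤ δ k)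
    (F : H → ℝ) (hF : Differentiable ℝ F)
    (hFlip : ∀ w v : H, |F w - F v| ≤ M * ‖w - v‖)
    (Fk : K → H → ℝ) (hFk : ∀ k, Differentiable ℝ (Fk k))
    (hlip : ∀ k, ∀ w v : H, ‖gradient (Fk k) w - gradient (Fk k) v‖ ≤ L * ‖w - v‖)
    (hdiv : ∀ k, ∀ x : H, ‖gradient (Fk k) x - gradient F x‖ ≤ δ k)
    (w₀ : H) (w : K → ℕ → H) (v : ℕ → H)
    (hw0 : ∀ k, w k 0 = w₀) (hv0 : v 0 = w₀)
    (hw : ∀ k, ∀ e : ℕ, 1 ≤ e → w k e = w k (e - 1) - η • gradient (Fk k) (w k (e - 1)))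
    (hv : ∀ e : ℕ, 1 ≤ e → v e = v (e - 1) - η • gradient F (v (e - 1)))
    {I : Type*} [Fintype I]
    (u : I → H) (hu : ∀ l, u l ≠ 0)
    (E : ℕ) :
    |F ((∑ k, p k • w k E) + ηg • ∑ l, ‖u l‖⁻¹ • u l) - F (v E)| ≤
      M * (∑ k, p k * δ k) / L * ((η * L + 1) ^ E - 1) +
        M * ηg * (Fintype.card I) := by
  have key : ∀ k, ∀ e : ℕ, ‖w k e - v e‖ ≤ δ k / L * ((η * L + 1) ^ e - 1) := by
    intro k e
    induction e with
    | zero => simp [hw0, hv0]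
    | succ e ih =>
      have h1 := hw k (e + 1) (by omega)
      have h2 := hv (e + 1) (by omega)
      simp only [Nat.add_sub_cancel] at h1 h2
      have h3 : w k (e + 1) - v (e + 1) = (w k e - v e)
          - η • (gradient (Fk k) (w k e) - gradient (Fk k) (v e))
          - η • (gradient (Fk k) (v e) - gradient F (v e)) := by
        rw [h1, h2]; module
      have a1 := hlip k (w k e) (v e)
      have a2 := hdiv k (v e)
      have hq : 0 ≤ η * L + 1 := by positivity
      calc ‖w k (e + 1) - v (e + 1)‖
          ≤ ‖w k e - v e‖ + ‖η • (gradient (Fk k) (w k e) - gradient (Fk k) (v e))‖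
            + ‖η • (gradient (Fk k) (v e) - gradient F (v e))‖ := by
            rw [h3]
            exact (norm_sub_le _ _).trans (add_le_add_left (norm_sub_le _ _) _)
        _ = ‖w k e - v e‖ + η * ‖gradient (Fk k) (w k e) - gradient (Fk k) (v e)‖
            + η * ‖gradient (Fk k) (v e) - gradient F (v e)‖ := by
            rw [norm_smul, norm_smul, Real.norm_of_nonneg hη.le]
        _ ≤ ‖w k e - v e‖ + η * (L * ‖w k e - v e‖) + η * δ k := by gcongr
        _ = (η * L + 1) * ‖w k e - v e‖ + η * δ k := by ring
        _ ≤ (η * L + 1) * (δ k / L * ((η * L + 1) ^ e - 1)) + η * δ k := by gcongr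
        _ = δ k / L * ((η * L + 1) ^ (e + 1) - 1) := by
            field_simp
            ring
  have hs : (∑ k, p k • w k E) + ηg • ∑ l, ‖u l‖⁻¹ • u l - v E
      = (∑ k, p k • (w k E - v E)) + ηg • ∑ l, ‖u l‖⁻¹ • u l := by
    simp only [smul_sub, Finset.sum_sub_distrib, ← Finset.sum_smul, hsum, one_smul]
    abel
  have b1 : ‖∑ k, p k • (w k E - v E)‖ ≤ (∑ k, p k * δ k) / L * ((η * L + 1) ^ E - 1) := by
    rw [Finset.sum_div, Finset.sum_mul]
    refine norm_sum_le_of_le _ fun k _ => ?_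
    rw [norm_smul, Real.norm_of_nonneg (hp k), mul_div_assoc, mul_assoc]
    exact mul_le_mul_of_nonneg_left (key k E) (hp k)
  have b2 : ‖ηg • ∑ l, ‖u l‖⁻¹ • u l‖ ≤ ηg * (Fintype.card I) := by
    rw [norm_smul, Real.norm_of_nonneg hηg]
    refine mul_le_mul_of_nonneg_left ?_ hηg
    have : ‖∑ l, ‖u l‖⁻¹ • u l‖ ≤ ∑ _l : I, (1 : ℝ) := by
      refine norm_sum_le_of_le _ fun l _ => ?_
      rw [norm_smul, norm_inv, norm_norm, inv_mul_cancel₀ (norm_ne_zero_iff.mpr (hu l))]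
    simpa using this
  refine (hFlip _ _).trans ?_
  rw [hs]
  calc M * ‖(∑ k, p k • (w k E - v E)) + ηg • ∑ l, ‖u l‖⁻¹ • u l‖
      ≤ M * ((∑ k, p k * δ k) / L * ((η * L + 1) ^ E - 1) + ηg * (Fintype.card I)) :=
        mul_le_mul_of_nonneg_left ((norm_add_le _ _).trans (add_le_add b1 b2)) hM
    _ = _ := by ring
end
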